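/- arXiv:2102.11496 — 3 statements merged into one kernel-verified Lean document; each statement's English description precedes it below -/
import Mathlib

section
/- There exist ε > 0 and c_q < q such that for every δ > 0 the following holds for all sufficiently large n: for every set A ⊆ F_q^n with |A| > c_q^n and every admissible tuple a = (a,b,c), one has |A_a^ε| ≥ (1−δ)|A|. -/
/-!
Call a set solution-free if it contains only the trivial solutions `x = y = z` of
`a x + b y + c z = 0`. The indicator of this equation on `F_q^n` is a product over the coordinates
of polynomials of degree at most `q - 1`, so each of its monomials has degree at most
`n (q - 1) / 3` in one of `x`, `y`, `z`. Restricted to a solution-free set the indicator is a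
diagonal tensor, and Tao's slice rank argument bounds the set by three times the number of exponent
vectors of that low degree, which is at most `γ ^ n` for some `γ < q` by Chernoff's method.

If each point `x` of a set `B` starts at most `t` solutions in `B`, the digraph joining `x` to the
entries `y` of its solutions has out-degree at most `t`, so an independent set of size at least
`|B| / (2 t + 1)`; such a set is solution-free, since `x = y` forces `z = x`. With
`t = |A| ^ ε ≤ q ^ (ε n)`, at most `9 (q ^ ε γ) ^ n` points of `A` lie outside `A_a^ε`. This is
negligible against `|A|` when `q ^ ε γ < c_q`.
-/

open Finset Function

theorem exists_mem_finrank_le_ncard_support {K X : Type*} [DivisionRing K] [Finite X]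
    (W : Submodule K (X → K)) : ∃ h ∈ W, Module.finrank K W ≤ (support h).ncard := by
  have hfin : (support '' (W : Set (X → K))).Finite := Set.toFinite _
  obtain ⟨_, ⟨h, hW, rfl⟩, hmax⟩ := hfin.exists_maximal ⟨_, 0, W.zero_mem, rfl⟩
  refine ⟨h, hW, ?_⟩
  let restrict : W →ₗ[K] (support h → K) := (LinearMap.funLeft K K Subtype.val).domRestrict W
  have restrict_injective : Injective restrict := by
    refine (injective_iff_map_eq_zero restrict).2 fun w hw => Subtype.ext (funext fun i => ?_)
    have hw' : ∀ i ∈ support h, w.1 i = 0 := fun i hi => congrFun hw ⟨i, hi⟩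
    have hle : support h ⊆ support (h + w.1) := fun i hi => by simpa [hw' i hi] using hi
    by_contra hi
    have hhi : h i = 0 := by_contra fun hhi => hi (hw' i hhi)
    exact hmax ⟨_, W.add_mem hW w.2, rfl⟩ hle (show (h + w.1) i ≠ 0 by simpa [hhi] using hi) hhi
  have := Fintype.ofFinite (support h)
  calc
    Module.finrank K W ≤ Module.finrank K (support h → K) :=
      LinearMap.finrank_le_finrank_of_injective restrict_injective
    _ = (support h).ncard := by
      rw [Module.finrank_fintype_fun_eq_card, ← Nat.card_eq_fintype_card, Nat.card_coe_set_eq]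

section SliceRank

variable {R K I J L X Y Z X' Y' Z' : Type*} [Fintype I] [Fintype J] [Fintype L]

/-- The tensors on `X × Y × Z` that are sums of slices of the three shapes `u i x * f y z`,
`v j y * g x z` and `w l z * h x y`. Its elements have slice rank, in the sense of Tao, at most
`|I| + |J| + |L|`; fixing the one-variable factors makes them a submodule. -/
def sliceSpan [CommSemiring R] (u : I → X → R) (v : J → Y → R) (w : L → Z → R) :
    Submodule R (X → Y → Z → R) where
  carrier := {T | ∃ (f : I → Y → Z → R) (g : J → X → Z → R) (h : L → X → Y → R), ∀ x y z,
    T x y z = ∑ i, u i x * f i y z + ∑ j, v j y * g j x z + ∑ l, w l z * h l x y}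
  zero_mem' := ⟨0, 0, 0, by simp⟩
  add_mem' := by
    rintro S T ⟨f, g, h, hS⟩ ⟨f', g', h', hT⟩
    refine ⟨f + f', g + g', h + h', fun x y z => ?_⟩
    simp only [Pi.add_apply, hS, hT, mul_add, sum_add_distrib]
    ring
  smul_mem' := by
    rintro r T ⟨f, g, h, hT⟩
    refine ⟨r • f, r • g, r • h, fun x y z => ?_⟩
    simp only [Pi.smul_apply, smul_eq_mul, hT, mul_add, mul_sum, mul_left_comm r]

section CommSemiring

variable [CommSemiring R] {u : I → X → R} {v : J → Y → R} {w : L → Z → R}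

theorem mul_mem_sliceSpan_left (i : I) (f : Y → Z → R) :
    (fun x y z => u i x * f y z) ∈ sliceSpan u v w := by
  classical
  refine ⟨Pi.single i f, 0, 0, fun x y z => ?_⟩
  rw [Fintype.sum_eq_single i fun i' hi' => by simp [hi']]
  simp

theorem mul_mem_sliceSpan_middle (j : J) (g : X → Z → R) :
    (fun x y z => v j y * g x z) ∈ sliceSpan u v w := by
  classical
  refine ⟨0, Pi.single j g, 0, fun x y z => ?_⟩
  rw [Fintype.sum_eq_single (a := j) fun j' hj' => by simp [hj']]
  simp

theorem mul_mem_sliceSpan_right (l : L) (h : X → Y → R) :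
    (fun x y z => w l z * h x y) ∈ sliceSpan u v w := by
  classical
  refine ⟨0, 0, Pi.single l h, fun x y z => ?_⟩
  rw [Fintype.sum_eq_single (a := l) fun l' hl' => by simp [hl']]
  simp

theorem comp_mem_sliceSpan {T : X → Y → Z → R} (hT : T ∈ sliceSpan u v w)
    (φ : X' → X) (ψ : Y' → Y) (χ : Z' → Z) :
    (fun x y z => T (φ x) (ψ y) (χ z)) ∈
      sliceSpan (fun i => u i ∘ φ) (fun j => v j ∘ ψ) (fun l => w l ∘ χ) := by
  obtain ⟨f, g, h, hT⟩ := hT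
  exact ⟨fun i y z => f i (ψ y) (χ z), fun j x z => g j (φ x) (χ z),
    fun l x y => h l (φ x) (ψ y), fun x y z => hT (φ x) (ψ y) (χ z)⟩

theorem rank_contract_le_of_mem_sliceSpan [StrongRankCondition R] [Fintype X] [Fintype Z]
    {T : X → Y → Z → R} (hT : T ∈ sliceSpan u v w) {h : X → R} (hu : ∀ i, ∑ x, u i x * h x = 0) :
    (Matrix.of fun y z => ∑ x, h x * T x y z).rank ≤ Fintype.card J + Fintype.card L := by
  obtain ⟨f, g, k, hT⟩ := hT
  have hvanish (y : Y) (z : Z) : ∑ x, h x * ∑ i, u i x * f i y z = 0 := calc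
    _ = ∑ i, (∑ x, u i x * h x) * f i y z := by
      simp only [mul_sum, sum_mul]
      rw [sum_comm]
      exact sum_congr rfl fun i _ => sum_congr rfl fun x _ => by ring
    _ = 0 := by simp [hu]
  have hfactor : (Matrix.of fun y z => ∑ x, h x * T x y z) =
      Matrix.fromCols (Matrix.of fun y j => v j y) (Matrix.of fun y l => ∑ x, h x * k l x y) *
        Matrix.fromRows (Matrix.of fun j z => ∑ x, h x * g j x z) (Matrix.of w) := by
    rw [Matrix.fromCols_mul_fromRows]
    ext y z
    simp only [Matrix.add_apply, Matrix.mul_apply, Matrix.of_apply, hT, mul_add, sum_add_distrib,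
      hvanish, zero_add]
    simp only [mul_sum, sum_mul]
    congr 1 <;> rw [sum_comm] <;>
      exact sum_congr rfl fun _ _ => sum_congr rfl fun _ _ => by ring
  rw [hfactor, ← Fintype.card_sum]
  exact (Matrix.rank_mul_le_left _ _).trans (Matrix.rank_le_card_width _)

end CommSemiring

theorem card_le_of_mem_sliceSpan_of_diagonal [Field K] [Fintype X]
    {u : I → X → K} {v : J → X → K} {w : L → X → K} {T : X → X → X → K}
    (hT : T ∈ sliceSpan u v w) (hdiag : ∀ x y z, T x y z ≠ 0 ↔ x = y ∧ y = z) :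
    Fintype.card X ≤ Fintype.card I + Fintype.card J + Fintype.card L := by
  classical
  let U : Matrix I X K := Matrix.of u
  have hker : Fintype.card X ≤ Fintype.card I + Module.finrank K U.mulVecLin.ker := by
    have hrank : U.rank ≤ Fintype.card I := U.rank_le_card_height
    have hadd := U.mulVecLin.finrank_range_add_finrank_ker
    rw [Module.finrank_fintype_fun_eq_card] at hadd
    exact hadd ▸ Nat.add_le_add_right hrank _
  obtain ⟨h, hU, hsupp⟩ := exists_mem_finrank_le_ncard_support U.mulVecLin.ker
  have hcontract : (Matrix.of fun y z => ∑ x, h x * T x y z) =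
      Matrix.diagonal fun x => h x * T x x x := by
    have hzero {x y z : X} (hxyz : ¬(x = y ∧ y = z)) : T x y z = 0 := by
      simpa [hxyz] using hdiag x y z
    ext y z
    rw [Matrix.of_apply, Fintype.sum_eq_single y fun x hx => by simp [hzero (mt And.left hx)]]
    by_cases hyz : y = z
    · simp [hyz]
    · simp [hzero (mt And.right hyz), hyz]
  have hrank := rank_contract_le_of_mem_sliceSpan hT fun i => congrFun (LinearMap.mem_ker.1 hU) i
  have hcard : Fintype.card {x // h x * T x x x ≠ 0} = (support h).ncard := by
    rw [← Nat.card_coe_set_eq, ← Nat.card_eq_fintype_card]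
    exact Nat.card_congr (Equiv.subtypeEquivRight fun x => by simp [(hdiag x x x).2 ⟨rfl, rfl⟩])
  rw [hcontract, Matrix.rank_diagonal, hcard] at hrank
  lia

end SliceRank

section LowDegree

/-- The exponent vectors of monomials of degree at most `m` in each variable and total degree at
most `|ι| m / 3`; the factor `3` avoids rounding the quotient. -/
def lowDegreeExponents (ι : Type*) [Fintype ι] [DecidableEq ι] (m : ℕ) : Finset (ι → ℕ) :=
  {e ∈ Fintype.piFinset fun _ => range (m + 1) | 3 * ∑ i, e i ≤ Fintype.card ι * m}

theorem exists_mem_lowDegreeExponents {ι : Type*} [Fintype ι] [DecidableEq ι] {m : ℕ}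
    {e : Fin 3 → ι → ℕ} (he : ∀ i, ∑ j, e j i ≤ m) : ∃ j, e j ∈ lowDegreeExponents ι m := by
  have htotal : ∑ j, 3 * ∑ i, e j i ≤ ∑ _j : Fin 3, Fintype.card ι * m := by
    rw [← mul_sum, sum_comm, sum_const, card_fin, smul_eq_mul, ← smul_eq_mul (Fintype.card ι)]
    exact Nat.mul_le_mul_left 3 (sum_le_card_nsmul _ _ _ fun i _ => he i)
  obtain ⟨j, -, hj⟩ := exists_le_of_sum_le univ_nonempty htotal
  refine ⟨j, mem_filter.2 ⟨Fintype.mem_piFinset.2 fun i => mem_range_succ_iff.2 ?_, hj⟩⟩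
  exact (single_le_sum (fun _ _ => Nat.zero_le _) (mem_univ j)).trans (he i)

/-- The monomials with exponents in `lowDegreeExponents ι m`, as functions on `ι → R`. -/
def lowDegreeMonomial (ι : Type*) [Fintype ι] [DecidableEq ι] (R : Type*) [CommSemiring R] (m : ℕ)
    (e : lowDegreeExponents ι m) (x : ι → R) : R :=
  ∏ i, x i ^ e.1 i

theorem mul_prod_pow_mem_sliceSpan {ι R : Type*} [Fintype ι] [DecidableEq ι] [CommSemiring R]
    {m : ℕ} (r : R) {e : Fin 3 → ι → ℕ} (he : ∀ i, ∑ j, e j i ≤ m) :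
    (fun x y z : ι → R =>
      r * ((∏ i, x i ^ e 0 i) * (∏ i, y i ^ e 1 i) * ∏ i, z i ^ e 2 i)) ∈
      sliceSpan (lowDegreeMonomial ι R m) (lowDegreeMonomial ι R m) (lowDegreeMonomial ι R m) := by
  obtain ⟨j, hj⟩ := exists_mem_lowDegreeExponents he
  match j, hj with
  | 0, h0 =>
    convert mul_mem_sliceSpan_left (u := lowDegreeMonomial ι R m) ⟨e 0, h0⟩ fun y z : ι → R =>
      r * ((∏ i, y i ^ e 1 i) * ∏ i, z i ^ e 2 i) using 4
    simp only [lowDegreeMonomial]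
    ring
  | 1, h1 =>
    convert mul_mem_sliceSpan_middle (v := lowDegreeMonomial ι R m) ⟨e 1, h1⟩ fun x z : ι → R =>
      r * ((∏ i, x i ^ e 0 i) * ∏ i, z i ^ e 2 i) using 4
    simp only [lowDegreeMonomial]
    ring
  | 2, h2 =>
    convert mul_mem_sliceSpan_right (w := lowDegreeMonomial ι R m) ⟨e 2, h2⟩ fun x y : ι → R =>
      r * ((∏ i, x i ^ e 0 i) * ∏ i, y i ^ e 1 i) using 4
    simp only [lowDegreeMonomial]
    ring

open MvPolynomial in
theorem prod_eval_mem_sliceSpan {ι R : Type*} [Fintype ι] [DecidableEq ι] [CommSemiring R] {m : ℕ}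
    {P : ι → MvPolynomial (Fin 3) R} (hP : ∀ i, (P i).totalDegree ≤ m) :
    (fun x y z : ι → R => ∏ i, eval ![x i, y i, z i] (P i)) ∈
      sliceSpan (lowDegreeMonomial ι R m) (lowDegreeMonomial ι R m) (lowDegreeMonomial ι R m) := by
  have hexpand : (fun x y z : ι → R => ∏ i, eval ![x i, y i, z i] (P i)) =
      ∑ p ∈ Fintype.piFinset fun i => (P i).support, fun x y z => (∏ i, (P i).coeff (p i)) *
        ((∏ i, x i ^ p i 0) * (∏ i, y i ^ p i 1) * ∏ i, z i ^ p i 2) := by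
    ext x y z
    simp only [eval_eq', Fin.prod_univ_three, prod_univ_sum, prod_mul_distrib, Finset.sum_apply]
    rfl
  rw [hexpand]
  refine Submodule.sum_mem _ fun p hp =>
    mul_prod_pow_mem_sliceSpan (e := fun j i => p i j) _ fun i => ?_
  have hdeg := (le_totalDegree (Fintype.mem_piFinset.1 hp i)).trans (hP i)
  rwa [Finsupp.sum_fintype _ _ fun _ => rfl] at hdeg

theorem exists_sum_range_pow_three_mul_lt {m : ℕ} (hm : m ≠ 0) :
    ∃ s : ℝ, 0 < s ∧ s ≤ 1 ∧ ∑ i ∈ range (m + 1), s ^ (3 * i) < (m + 1) * s ^ m := by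
  -- Both sides equal `m + 1` at `s = 1`, where the left one has the larger derivative.
  let G : ℝ → ℝ := fun s => ∑ i ∈ range (m + 1), s ^ (3 * i) - (m + 1) * s ^ m
  have hsum : ∑ i ∈ range (m + 1), (i : ℝ) = (m + 1) * m / 2 := by
    rw [eq_div_iff two_ne_zero]
    simpa using congrArg (Nat.cast (R := ℝ)) (sum_range_id_mul_two (m + 1))
  have hderiv : HasDerivAt G ((m + 1) * m / 2) 1 := by
    have hpow := HasDerivAt.fun_sum (u := range (m + 1)) fun i _ => hasDerivAt_pow (3 * i) (1 : ℝ)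
    refine (hpow.sub ((hasDerivAt_pow m 1).const_mul ((m : ℝ) + 1))).congr_deriv ?_
    simp only [one_pow, mul_one, Nat.cast_mul, ← mul_sum, hsum]
    push_cast
    ring
  have hsign := eventually_nhdsWithin_sign_eq_of_deriv_pos (f := G) (x₀ := 1)
    (by rw [hderiv.deriv]; positivity) (by simp [G])
  obtain ⟨s, hs, hs0, hs1⟩ :=
    ((hsign.filter_mono nhdsWithin_le_nhds).and (Ioo_mem_nhdsLT one_pos)).exists
  rw [sign_neg (sub_neg.2 hs1), sign_eq_neg_one_iff] at hs
  exact ⟨s, hs0, hs1.le, sub_neg.1 hs⟩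

theorem card_lowDegreeExponents_mul_pow_le (ι : Type*) [Fintype ι] [DecidableEq ι] (m : ℕ) {s : ℝ}
    (hs0 : 0 ≤ s) (hs1 : s ≤ 1) :
    #(lowDegreeExponents ι m) * (s ^ m) ^ Fintype.card ι ≤
      (∑ i ∈ range (m + 1), s ^ (3 * i)) ^ Fintype.card ι := calc
  _ = ∑ _e ∈ lowDegreeExponents ι m, s ^ (Fintype.card ι * m) := by
    rw [sum_const, nsmul_eq_mul, mul_comm (Fintype.card ι), pow_mul]
  _ ≤ ∑ e ∈ lowDegreeExponents ι m, s ^ (3 * ∑ i, e i) :=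
    sum_le_sum fun _ he => pow_le_pow_of_le_one hs0 hs1 (mem_filter.1 he).2
  _ ≤ ∑ e ∈ Fintype.piFinset fun _ => range (m + 1), s ^ (3 * ∑ i, e i) :=
    sum_le_sum_of_subset_of_nonneg (filter_subset _ _) fun _ _ _ => by positivity
  _ = (∑ i ∈ range (m + 1), s ^ (3 * i)) ^ Fintype.card ι := by
    rw [← card_univ, ← prod_const, prod_univ_sum]
    simp only [mul_sum, prod_pow_eq_pow_sum]

theorem exists_card_lowDegreeExponents_le_pow {m : ℕ} (hm : m ≠ 0) :
    ∃ γ : ℝ, 0 < γ ∧ γ < m + 1 ∧ ∀ n, #(lowDegreeExponents (Fin n) m) ≤ γ ^ n := by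
  obtain ⟨s, hs0, hs1, hs⟩ := exists_sum_range_pow_three_mul_lt hm
  refine ⟨(∑ i ∈ range (m + 1), s ^ (3 * i)) / s ^ m, ?_, ?_, fun n => ?_⟩
  · exact div_pos (sum_pos (fun i _ => by positivity) (by simp)) (by positivity)
  · rwa [div_lt_iff₀ (by positivity)]
  · rw [div_pow, le_div_iff₀ (by positivity)]
    simpa using card_lowDegreeExponents_mul_pow_le (Fin n) m hs0.le hs1

end LowDegree

section Digraph

variable {V : Type*} {r : V → V → Prop} [DecidableRel r] {B : Finset V} {d : ℕ}

theorem exists_card_filter_le_of_forall_card_filter_le (hB : B.Nonempty)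
    (hr : ∀ x ∈ B, #{y ∈ B | r x y} ≤ d) : ∃ y ∈ B, #{x ∈ B | r x y} ≤ d := by
  by_contra! hlt
  exact lt_irrefl _ (card_nsmul_lt_card_nsmul_of_lt_of_le (m := d) (n := d) (swap r) hB hlt hr)

theorem exists_subset_pairwise_not_rel_of_forall_card_filter_le
    (hr : ∀ x ∈ B, #{y ∈ B | r x y} ≤ d) :
    ∃ S ⊆ B, (S : Set V).Pairwise (fun x y => ¬ r x y) ∧ #B ≤ (2 * d + 1) * #S := by
  classical
  induction B using Finset.strongInduction with
  | H B ih =>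
  rcases B.eq_empty_or_nonempty with rfl | hB
  · exact ⟨∅, by simp⟩
  obtain ⟨v, hvB, hin⟩ := exists_card_filter_le_of_forall_card_filter_le hB hr
  let D := insert v ({y ∈ B | r v y} ∪ {x ∈ B | r x v})
  have hDcard : #D ≤ 2 * d + 1 := by
    have := hr v hvB
    have := card_union_le {y ∈ B | r v y} {x ∈ B | r x v}
    have := card_insert_le v ({y ∈ B | r v y} ∪ {x ∈ B | r x v})
    lia
  have hvD : v ∈ D := mem_insert_self _ _
  obtain ⟨S, hSB, hS, hcard⟩ := ih (B \ D)
    (ssubset_iff_of_subset sdiff_subset |>.2 ⟨v, hvB, by simp [hvD]⟩) fun x hx =>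
      (card_le_card (filter_subset_filter _ sdiff_subset)).trans (hr x (mem_sdiff.1 hx).1)
  have hvS : v ∉ S := fun hv => (mem_sdiff.1 (hSB hv)).2 hvD
  refine ⟨insert v S, insert_subset hvB (hSB.trans sdiff_subset), ?_, ?_⟩
  · rw [coe_insert, Set.pairwise_insert]
    refine ⟨hS, fun y hy _ => ?_⟩
    have := mem_sdiff.1 (hSB hy)
    simp only [D, mem_insert, mem_union, mem_filter] at this
    tauto
  · have := le_card_sdiff D B
    rw [card_insert_of_notMem hvS]
    lia

end Digraph

section SolutionFree

section Module

variable {K V : Type*} [Ring K] [AddCommGroup V] [Module K V]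

/-- `S` contains only the trivial solutions `x = y = z` of `a • x + b • y + c • z = 0`; for
`a = b = c = 1` over `𝔽₃` these are the cap sets. -/
def IsSolutionFree (a b c : K) (S : Set V) : Prop :=
  ∀ ⦃x⦄, x ∈ S → ∀ ⦃y⦄, y ∈ S → ∀ ⦃z⦄, z ∈ S → a • x + b • y + c • z = 0 → x = y ∧ y = z

/-- The pairs `(y, z) ∈ A²` completing `x` to a solution of `a • x + b • y + c • z = 0`. -/
def solutionPairs (a b c : K) (A : Set V) (x : V) : Set (V × V) :=
  {p | p.1 ∈ A ∧ p.2 ∈ A ∧ a • x + b • p.1 + c • p.2 = 0}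

/-- The complement in `A` of the paper's `A_a^ε`, with `t` in place of the threshold `|A| ^ ε`. -/
def poorPoints (a b c : K) (A : Set V) (t : ℝ) : Set V :=
  {x ∈ A | (solutionPairs a b c A x).ncard < t}

theorem ncard_sep_add_ncard_poorPoints (a b c : K) {A : Set V} (hA : A.Finite) (t : ℝ) :
    {x ∈ A | t ≤ (solutionPairs a b c A x).ncard}.ncard + (poorPoints a b c A t).ncard =
      A.ncard := by
  rw [← Set.ncard_inter_add_ncard_sdiff_eq_ncard A {x | t ≤ (solutionPairs a b c A x).ncard} hA]
  congr 2
  ext x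
  simp [poorPoints]

variable {a b c : K}

theorem solutionPairs_finite {A : Set V} (hA : A.Finite) (x : V) :
    (solutionPairs a b c A x).Finite :=
  (hA.prod hA).subset fun _ hp => ⟨hp.1, hp.2.1⟩

theorem solutionPairs_mono {A B : Set V} (hAB : A ⊆ B) (x : V) :
    solutionPairs a b c A x ⊆ solutionPairs a b c B x :=
  fun _ hp => ⟨hAB hp.1, hAB hp.2.1, hp.2.2⟩

theorem exists_isSolutionFree_subset_of_ncard_solutionPairs_le [IsDomain K]
    [Module.IsTorsionFree K V] {B : Finset V} {t : ℕ} (hc : c ≠ 0) (habc : a + b + c = 0)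
    (hB : ∀ x ∈ B, (solutionPairs a b c B x).ncard ≤ t) :
    ∃ S ⊆ B, IsSolutionFree a b c (S : Set V) ∧ #B ≤ (2 * t + 1) * #S := by
  classical
  let r (x y : V) : Prop := ∃ z ∈ B, a • x + b • y + c • z = 0
  have hr (x) (hx : x ∈ B) : #{y ∈ B | r x y} ≤ t := by
    have hfin := solutionPairs_finite (a := a) (b := b) (c := c) B.finite_toSet x
    have hsub : (({y ∈ B | r x y} : Finset V) : Set V) ⊆ Prod.fst '' solutionPairs a b c B x := by
      intro y hy
      obtain ⟨hyB, z, hzB, hz⟩ := mem_filter.1 (mem_coe.1 hy)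
      exact ⟨(y, z), ⟨hyB, hzB, hz⟩, rfl⟩
    rw [← Set.ncard_coe_finset]
    exact (Set.ncard_le_ncard hsub (hfin.image _)).trans ((Set.ncard_image_le hfin).trans (hB x hx))
  obtain ⟨S, hSB, hS, hcard⟩ := exists_subset_pairwise_not_rel_of_forall_card_filter_le hr
  refine ⟨S, hSB, fun x hx y hy z hz h => ?_, hcard⟩
  obtain rfl : x = y := by_contra fun hxy => hS hx hy hxy ⟨z, hSB hz, h⟩
  have hzx : c • z = c • x := by
    rw [← add_smul, eq_neg_of_add_eq_zero_left habc, neg_smul, neg_add_eq_zero] at h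
    exact h.symm
  exact ⟨rfl, (smul_right_injective V hc hzx).symm⟩

end Module

section FiniteField

variable {F : Type*} [Field F] [Fintype F] {a b c : F}

open MvPolynomial in
/-- The polynomial with value `1` on the plane `a x + b y + c z = 0` of `F³` and, by Fermat, `0`
elsewhere. -/
noncomputable def planeIndicator (a b c : F) : MvPolynomial (Fin 3) F :=
  1 - (C a * X 0 + C b * X 1 + C c * X 2) ^ (Fintype.card F - 1)

open MvPolynomial in
theorem totalDegree_planeIndicator_le (a b c : F) :
    (planeIndicator a b c).totalDegree ≤ Fintype.card F - 1 := by
  have hlinear : (C a * X 0 + C b * X 1 + C c * X 2 : MvPolynomial (Fin 3) F).IsHomogeneous 1 :=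
    ((isHomogeneous_C_mul_X a 0).add (isHomogeneous_C_mul_X b 1)).add (isHomogeneous_C_mul_X c 2)
  refine (totalDegree_sub _ _).trans (max_le (by simp) ?_)
  simpa using (hlinear.pow (Fintype.card F - 1)).totalDegree_le

theorem eval_planeIndicator [DecidableEq F] (a b c x y z : F) :
    MvPolynomial.eval ![x, y, z] (planeIndicator a b c) =
      if a * x + b * y + c * z = 0 then 1 else 0 := by
  have hq : Fintype.card F - 1 ≠ 0 := Nat.sub_ne_zero_of_lt Fintype.one_lt_card
  split_ifs with h
  · simp [planeIndicator, h, hq]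
  · simp [planeIndicator, FiniteField.pow_card_sub_one_eq_one _ h]

variable {ι : Type*} [Fintype ι]

theorem prod_eval_planeIndicator_ne_zero_iff (a b c : F) (x y z : ι → F) :
    ∏ i, MvPolynomial.eval ![x i, y i, z i] (planeIndicator a b c) ≠ 0 ↔
      a • x + b • y + c • z = 0 := by
  classical
  simp [prod_ne_zero_iff, eval_planeIndicator, funext_iff]

variable [DecidableEq ι]

theorem IsSolutionFree.card_le {S : Finset (ι → F)} (hS : IsSolutionFree a b c (S : Set (ι → F)))
    (habc : a + b + c = 0) : #S ≤ 3 * #(lowDegreeExponents ι (Fintype.card F - 1)) := by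
  have hspan := comp_mem_sliceSpan
    (prod_eval_mem_sliceSpan fun _ : ι => totalDegree_planeIndicator_le a b c)
    (Subtype.val : S → ι → F) (Subtype.val : S → ι → F) (Subtype.val : S → ι → F)
  have hcard := card_le_of_mem_sliceSpan_of_diagonal hspan fun x y z => by
    rw [prod_eval_planeIndicator_ne_zero_iff]
    constructor
    · intro h
      exact (hS x.2 y.2 z.2 h).imp Subtype.ext Subtype.ext
    · rintro ⟨rfl, rfl⟩
      rw [← add_smul, ← add_smul, habc, zero_smul]
  simp only [Fintype.card_coe] at hcard
  lia

theorem ncard_poorPoints_le (hc : c ≠ 0) (habc : a + b + c = 0) (A : Set (ι → F)) {t : ℝ}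
    (ht : 0 ≤ t) : (poorPoints a b c A t).ncard ≤
      (2 * t + 1) * (3 * #(lowDegreeExponents ι (Fintype.card F - 1))) := by
  classical
  let B : Finset (ι → F) := (poorPoints a b c A t).toFinset
  have hB : ∀ x ∈ B, (solutionPairs a b c (B : Set (ι → F)) x).ncard ≤ ⌊t⌋₊ := by
    intro x hx
    have hxt := (Set.mem_toFinset.1 hx).2
    refine le_trans (Set.ncard_le_ncard (solutionPairs_mono ?_ x)) (Nat.le_floor hxt.le)
    exact fun y hy => (Set.mem_toFinset.1 hy).1
  obtain ⟨S, -, hfree, hcard⟩ := exists_isSolutionFree_subset_of_ncard_solutionPairs_le hc habc hB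
  calc ((poorPoints a b c A t).ncard : ℝ) = #B := by rw [Set.ncard_eq_toFinset_card']
    _ ≤ (2 * ⌊t⌋₊ + 1) * #S := mod_cast hcard
    _ ≤ (2 * t + 1) * (3 * #(lowDegreeExponents ι (Fintype.card F - 1))) := by
      gcongr
      · exact Nat.floor_le ht
      · exact_mod_cast hfree.card_le habc

theorem exists_rpow_mul_lt {q γ : ℝ} (hq : 0 < q) (hγ : γ < q) :
    ∃ ε : ℝ, 0 < ε ∧ q ^ ε * γ < q := by
  have hcont : ContinuousAt (fun ε : ℝ => q ^ ε * γ) 0 :=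
    (Real.continuousAt_const_rpow hq.ne').mul continuousAt_const
  have hev : ∀ᶠ ε in nhdsWithin (0 : ℝ) (Set.Ioi 0), q ^ ε * γ < q :=
    (hcont.eventually_lt_const (by simpa using hγ)).filter_mono nhdsWithin_le_nhds
  obtain ⟨ε, hlt, hε⟩ := (hev.and self_mem_nhdsWithin).exists
  exact ⟨ε, hε, hlt⟩

theorem exists_ncard_poorPoints_le_pow (F : Type*) [Field F] [Fintype F] :
    ∃ ε : ℝ, 0 < ε ∧ ∃ ρ : ℝ, 0 < ρ ∧ ρ < Fintype.card F ∧
      ∀ (n : ℕ) (A : Set (Fin n → F)) (a b c : F), c ≠ 0 → a + b + c = 0 →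
        (poorPoints a b c A ((A.ncard : ℝ) ^ ε)).ncard ≤ 9 * ρ ^ n := by
  have hq : 1 < Fintype.card F := Fintype.one_lt_card
  obtain ⟨γ, hγ0, hγq, hγ⟩ := exists_card_lowDegreeExponents_le_pow (Nat.sub_ne_zero_of_lt hq)
  rw [Nat.cast_pred (by lia), sub_add_cancel] at hγq
  obtain ⟨ε, hε, hεγ⟩ := exists_rpow_mul_lt (by positivity) hγq
  refine ⟨ε, hε, _, by positivity, hεγ, fun n A a b c hc habc => ?_⟩
  have hA : (A.ncard : ℝ) ≤ (Fintype.card F : ℝ) ^ n := by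
    have := Set.ncard_le_card A
    rw [Nat.card_fun] at this
    exact_mod_cast (by simpa using this)
  have hAε : (A.ncard : ℝ) ^ ε ≤ ((Fintype.card F : ℝ) ^ ε) ^ n := by
    rw [Real.rpow_pow_comm (by positivity)]
    gcongr
  have hqε : 1 ≤ ((Fintype.card F : ℝ) ^ ε) ^ n :=
    one_le_pow₀ (Real.one_le_rpow (mod_cast hq.le) hε.le)
  calc ((poorPoints a b c A ((A.ncard : ℝ) ^ ε)).ncard : ℝ)
      ≤ (2 * (A.ncard : ℝ) ^ ε + 1) * (3 * #(lowDegreeExponents (Fin n) (Fintype.card F - 1))) :=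
        ncard_poorPoints_le hc habc A (by positivity)
    _ ≤ (3 * ((Fintype.card F : ℝ) ^ ε) ^ n) * (3 * γ ^ n) := by
        gcongr
        · linarith
        · exact hγ n
    _ = 9 * ((Fintype.card F : ℝ) ^ ε * γ) ^ n := by ring

end FiniteField

end SolutionFree

/-- **Theorem (almost cap sets are large in density).**
There exist `ε > 0` and `c_q < q` such that for every `δ > 0` and all sufficiently
large `n`: for every `A ⊆ F_q^n` with `|A| > c_q^n` and every admissible tuple
`(a, b, c)` (i.e. `a, b, c ≠ 0` and `a + b + c = 0`), the set
`A_a^ε = {x ∈ A | ∃ at least |A|^ε pairs (y,z) ∈ A² with ax + by + cz = 0}`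
satisfies `|A_a^ε| ≥ (1 - δ)|A|`. -/
theorem almost_cap_set_density {F : Type*} [Field F] [Fintype F] :
    ∃ ε : ℝ, 0 < ε ∧ ∃ cq : ℝ, cq < (Fintype.card F : ℝ) ∧
      ∀ δ : ℝ, 0 < δ → ∃ N : ℕ, ∀ n : ℕ, N ≤ n →
        ∀ A : Set (Fin n → F), cq ^ n < (A.ncard : ℝ) →
        ∀ a b c : F, a ≠ 0 → b ≠ 0 → c ≠ 0 → a + b + c = 0 →
          (1 - δ) * (A.ncard : ℝ) ≤
            (({x ∈ A | ((A.ncard : ℝ)) ^ ε ≤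
              (({p : (Fin n → F) × (Fin n → F) | p.1 ∈ A ∧ p.2 ∈ A ∧
                a • x + b • p.1 + c • p.2 = 0}).ncard : ℝ)}).ncard : ℝ) := by
  obtain ⟨ε, hε, ρ, hρ0, hρq, hpoor⟩ := exists_ncard_poorPoints_le_pow F
  obtain ⟨cq, hρcq, hcq⟩ := exists_between hρq
  refine ⟨ε, hε, cq, hcq, fun δ hδ => ?_⟩
  have hlittleO : (fun n : ℕ => 9 * ρ ^ n) =o[Filter.atTop] fun n : ℕ => cq ^ n :=
    (isLittleO_pow_pow_of_lt_left hρ0.le hρcq).const_mul_left 9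
  obtain ⟨N, hN⟩ := Filter.eventually_atTop.1 (hlittleO.def hδ)
  refine ⟨N, fun n hn A hA a b c _ _ hc habc => ?_⟩
  have hpoorδ : ((poorPoints a b c A ((A.ncard : ℝ) ^ ε)).ncard : ℝ) ≤ δ * A.ncard := calc
    _ ≤ 9 * ρ ^ n := hpoor n A a b c hc habc
    _ ≤ δ * cq ^ n := by
      have hcq0 := hρ0.trans hρcq
      simpa [abs_of_pos hρ0, abs_of_pos hcq0] using hN n hn
    _ ≤ δ * A.ncard := by gcongr
  have hsplit : (({x ∈ A | (A.ncard : ℝ) ^ ε ≤ (solutionPairs a b c A x).ncard}.ncard : ℝ)) +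
      (poorPoints a b c A ((A.ncard : ℝ) ^ ε)).ncard = A.ncard :=
    mod_cast ncard_sep_add_ncard_poorPoints a b c A.toFinite _
  unfold solutionPairs at hsplit
  linarith
end

section
/- Let d ≥ 4, let a_1,…,a_d ∈ F_q∖{0} satisfy a_1+⋯+a_d = 0, and suppose the partial sums b_k = a_1+⋯+a_k are nonzero for all 2 ≤ k ≤ d−2. Let m ≥ 2d, let A ⊆ F_q^n, and let A_1 ⊆ A_2 ⊆ ⋯ ⊆ A_{d−2} ⊆ A be nonempty sets such that: (i) for every t ∈ A_1 there are at least m pairs (x_1,x_2) ∈ A_2^2 with a_1x_1 + a_2x_2 = b_2 t; (ii) for every 2 ≤ k ≤ d−3 and every t ∈ A_k there are at least m pairs (x, t') ∈ A_{k+1}^2 with b_k t + a_{k+1} x = b_{k+1} t'; and (iii) for every t ∈ A_{d−2} there are at least m pairs (x,y) ∈ A^2 with b_{d−2} t + a_{d−1} x + a_d y = 0. Then there exist pairwise distinct x_1,…,x_d ∈ A with a_1x_1 + ⋯ + a_dx_d = 0. -/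
/-!
Write `b_k = a_1 + ⋯ + a_k`. For `k = 2, …, d - 2` one builds distinct `x_1, …, x_k ∈ A` and some
`t ∈ A_k` with `a_1 x_1 + ⋯ + a_k x_k = b_k t`: an equation `b_k t + a_{k+1} x = b_{k+1} t'`
replaces `t` by `t'` at the cost of the new entry `x`. Since `x` determines `t'`, at most `k` of the
available pairs are spoiled by the entries already chosen.

The first two and the last two entries solve an equation `a x + b y = (a + b) t` with `a + b ≠ 0`
(in the last step because `a_1 + ⋯ + a_d = 0`), whose only solution with `x = y` is `(t, t)`.
-/

open Set

section Counting

variable {α β γ : Type*} {f : α → β} {g : α → γ} {S : Set α}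

lemma exists_mem_notMem_of_injOn_of_encard_lt {X : Set β} (hf : InjOn f S)
    (h : X.encard < S.encard) : ∃ p ∈ S, f p ∉ X := by
  by_contra! hX
  exact h.not_ge (encard_le_encard_of_injOn hX hf)

lemma exists_mem_notMem_notMem_of_injOn_of_encard_add_lt {X : Set β} {Y : Set γ}
    (hf : InjOn f S) (hg : InjOn g S) (h : X.encard + Y.encard < S.encard) :
    ∃ p ∈ S, f p ∉ X ∧ g p ∉ Y := by
  by_contra! hXY
  have hcover : S ⊆ (S ∩ f ⁻¹' X) ∪ (S ∩ g ⁻¹' Y) := fun p hp ↦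
    (em (f p ∈ X)).imp (⟨hp, ·⟩) fun hX ↦ ⟨hp, hXY p hp hX⟩
  have hX : (S ∩ f ⁻¹' X).encard ≤ X.encard :=
    encard_le_encard_of_injOn (fun _ hp ↦ hp.2) (hf.mono inter_subset_left)
  have hY : (S ∩ g ⁻¹' Y).encard ≤ Y.encard :=
    encard_le_encard_of_injOn (fun _ hp ↦ hp.2) (hg.mono inter_subset_left)
  exact h.not_ge <| (encard_le_encard hcover).trans <|
    (encard_union_le _ _).trans (add_le_add hX hY)

lemma natCast_lt_encard_of_lt_of_le_ncard {j m : ℕ} (hj : j < m) (hm : m ≤ S.ncard) :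
    (j : ℕ∞) < S.encard :=
  (Nat.cast_lt.2 (hj.trans_le hm)).trans_le (ncard_le_encard S)

end Counting

section TwoVariables

variable {R V : Type*} [Semiring R] [IsCancelMulZero R] [AddCommMonoid V] [Module R V]
  [Module.IsTorsionFree R V] {a b : R}

lemma eq_of_smul_add_smul_self_eq (hab : a + b ≠ 0) {x t : V}
    (h : a • x + b • x = (a + b) • t) : x = t :=
  smul_right_injective V hab ((add_smul a b x).trans h)

variable [IsCancelAdd V]

lemma injOn_fst_smul_add_smul_eq (a : R) (hb : b ≠ 0) (v : V) :
    InjOn Prod.fst {p : V × V | a • p.1 + b • p.2 = v} := by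
  rintro ⟨x, y⟩ h ⟨_, y'⟩ h' rfl
  have hy : y = y' := smul_right_injective V hb (add_left_cancel (h.trans h'.symm))
  rw [hy]

lemma injOn_snd_smul_add_smul_eq (ha : a ≠ 0) (b : R) (v : V) :
    InjOn Prod.snd {p : V × V | a • p.1 + b • p.2 = v} := by
  rintro ⟨x, y⟩ h ⟨x', _⟩ h' rfl
  have hx : x = x' := smul_right_injective V ha (add_right_cancel (h.trans h'.symm))
  rw [hx]

end TwoVariables

lemma image_update_Icc_add_one {α : Type*} (x : ℕ → α) (k : ℕ) (y : α) :
    Function.update x (k + 1) y '' Icc 1 (k + 1) = insert y (x '' Icc 1 k) := by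
  have heq : EqOn (Function.update x (k + 1) y) x (Icc 1 k) := fun i hi ↦
    Function.update_of_ne (Nat.lt_succ_of_le hi.2).ne _ _
  rw [← insert_Icc_right_eq_Icc_add_one (Nat.le_add_left 1 k), image_insert_eq,
    Function.update_self, heq.image_eq]

/-- The points `x 1, …, x k` are pairwise distinct elements of `A` and their linear combination with
coefficients `a 1, …, a k` is `v`. The values of `x` outside `{1, …, k}` are irrelevant. -/
structure IsDistinctCombination {R V : Type*} [Semiring R] [AddCommMonoid V] [Module R V]
    (a : ℕ → R) (A : Set V) (k : ℕ) (x : ℕ → V) (v : V) : Prop where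
  mapsTo : MapsTo x (Icc 1 k) A
  injOn : InjOn x (Icc 1 k)
  sum_eq : ∑ i ∈ Finset.Icc 1 k, a i • x i = v

namespace IsDistinctCombination

section Extension

variable {R V : Type*} [Semiring R] [AddCommMonoid V] [Module R V]
  {a : ℕ → R} {A : Set V} {k : ℕ} {x : ℕ → V} {v y z : V}

lemma zero (a : ℕ → R) (A : Set V) (x : ℕ → V) : IsDistinctCombination a A 0 x 0 :=
  ⟨by simp [MapsTo], by simp, by simp⟩

lemma encard_image (h : IsDistinctCombination a A k x v) : (x '' Icc 1 k).encard = k := by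
  rw [h.injOn.encard_image, ← Finset.coe_Icc, encard_coe_eq_coe_finsetCard, Nat.card_Icc,
    Nat.add_sub_cancel]

lemma mono {A' : Set V} (h : IsDistinctCombination a A k x v) (hA : A ⊆ A') :
    IsDistinctCombination a A' k x v :=
  ⟨h.mapsTo.mono_right hA, h.injOn, h.sum_eq⟩

lemma update (h : IsDistinctCombination a A k x v) (hyA : y ∈ A) (hy : y ∉ x '' Icc 1 k) :
    IsDistinctCombination a A (k + 1) (Function.update x (k + 1) y) (v + a (k + 1) • y) := by
  have heq : EqOn x (Function.update x (k + 1) y) (Icc 1 k) := fun i hi ↦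
    (Function.update_of_ne (Nat.lt_succ_of_le hi.2).ne _ _).symm
  refine ⟨?_, ?_, ?_⟩
  · rw [mapsTo_iff_image_subset, image_update_Icc_add_one]
    exact insert_subset hyA h.mapsTo.image_subset
  · rw [← insert_Icc_right_eq_Icc_add_one (Nat.le_add_left 1 k), injOn_insert (by simp),
      Function.update_self, ← heq.image_eq]
    exact ⟨h.injOn.congr heq, hy⟩
  · rw [Finset.sum_Icc_succ_top (Nat.le_add_left 1 k), Function.update_self, ← h.sum_eq]
    congr 1
    exact Finset.sum_congr rfl fun i hi ↦ by rw [heq (Finset.mem_Icc.1 hi)]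

lemma exists_add_two (h : IsDistinctCombination a A k x v) (hyA : y ∈ A) (hzA : z ∈ A)
    (hy : y ∉ x '' Icc 1 k) (hz : z ∉ x '' Icc 1 k) (hyz : y ≠ z) :
    ∃ x', IsDistinctCombination a A (k + 2) x' (v + a (k + 1) • y + a (k + 2) • z) := by
  refine ⟨_, (h.update hyA hy).update hzA ?_⟩
  rw [image_update_Icc_add_one, mem_insert_iff, not_or]
  exact ⟨hyz.symm, hz⟩

lemma exists_two [IsCancelMulZero R] [Module.IsTorsionFree R V] {t : V} (hb : a 1 + a 2 ≠ 0)
    (hS : 1 < {p : V × V | p.1 ∈ A ∧ p.2 ∈ A ∧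
      a 1 • p.1 + a 2 • p.2 = (a 1 + a 2) • t}.encard) :
    ∃ x, IsDistinctCombination a A 2 x ((a 1 + a 2) • t) := by
  obtain ⟨⟨y, z⟩, ⟨hyA, hzA, hyz⟩, hne⟩ := (one_lt_encard_iff_nontrivial.1 hS).exists_ne (t, t)
  have hdistinct : y ≠ z := by
    rintro rfl
    have hyt : y = t := eq_of_smul_add_smul_self_eq hb hyz
    exact hne (by rw [hyt])
  obtain ⟨x, hx⟩ := (zero a A fun _ ↦ 0).exists_add_two hyA hzA (by simp) (by simp) hdistinct
  exact ⟨x, by simpa [hyz] using hx⟩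

end Extension

section Solve

variable {R V : Type*} [Ring R] [IsCancelMulZero R] [AddCommGroup V] [Module R V]
  [Module.IsTorsionFree R V] {a : ℕ → R} {A B : Set V} {k : ℕ} {x : ℕ → V} {b c : R} {t : V}

lemma exists_add_one (h : IsDistinctCombination a A k x (b • t)) (hBA : B ⊆ A) (hc : c ≠ 0)
    (hS : k < {p : V × V | p.1 ∈ B ∧ p.2 ∈ B ∧ b • t + a (k + 1) • p.1 = c • p.2}.encard) :
    ∃ t' ∈ B, ∃ x', IsDistinctCombination a A (k + 1) x' (c • t') := by
  have hfst : InjOn Prod.fst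
      {p : V × V | p.1 ∈ B ∧ p.2 ∈ B ∧ b • t + a (k + 1) • p.1 = c • p.2} :=
    (injOn_fst_smul_add_smul_eq (a (k + 1)) (neg_ne_zero.2 hc) (-(b • t))).mono
      fun p ⟨_, _, hp⟩ ↦ by rw [mem_ofPred_eq, neg_smul, ← hp]; abel
  rw [← h.encard_image] at hS
  obtain ⟨⟨y, t'⟩, ⟨hyB, ht', hyt⟩, hy⟩ := exists_mem_notMem_of_injOn_of_encard_lt hfst hS
  exact ⟨t', ht', _, hyt ▸ h.update (hBA hyB) hy⟩

lemma exists_add_two_of_add_eq_zero (h : IsDistinctCombination a A k x (b • t)) (hb : b ≠ 0)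
    (ha₁ : a (k + 1) ≠ 0) (ha₂ : a (k + 2) ≠ 0) (hsum : b + a (k + 1) + a (k + 2) = 0)
    (hS : (2 * k + 1 : ℕ) < {p : V × V | p.1 ∈ A ∧ p.2 ∈ A ∧
      b • t + a (k + 1) • p.1 + a (k + 2) • p.2 = 0}.encard) :
    ∃ x', IsDistinctCombination a A (k + 2) x' 0 := by
  have hb' : a (k + 1) + a (k + 2) = -b := by
    rw [eq_neg_iff_add_eq_zero, ← hsum]; abel
  set S := {p : V × V | p.1 ∈ A ∧ p.2 ∈ A ∧ b • t + a (k + 1) • p.1 + a (k + 2) • p.2 = 0}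
  have hSeq : S ⊆ {p | a (k + 1) • p.1 + a (k + 2) • p.2 = (a (k + 1) + a (k + 2)) • t} :=
    fun p ⟨_, _, hp⟩ ↦ by
      rw [mem_ofPred_eq, hb', neg_smul, eq_neg_iff_add_eq_zero, ← hp]; abel
  have hcard : (insert t (x '' Icc 1 k)).encard + (x '' Icc 1 k).encard < S.encard := by
    refine lt_of_le_of_lt (add_le_add_left (encard_insert_le _ _) _) (lt_of_eq_of_lt ?_ hS)
    rw [h.encard_image]
    push_cast
    ring
  obtain ⟨⟨y, z⟩, hyz, hy, hz⟩ := exists_mem_notMem_notMem_of_injOn_of_encard_add_lt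
    ((injOn_fst_smul_add_smul_eq _ ha₂ _).mono hSeq)
    ((injOn_snd_smul_add_smul_eq ha₁ _ _).mono hSeq) hcard
  rw [mem_insert_iff, not_or] at hy
  have hdistinct : y ≠ z := by
    rintro rfl
    exact hy.1 (eq_of_smul_add_smul_self_eq (hb' ▸ neg_ne_zero.2 hb) (hSeq hyz))
  obtain ⟨hyA, hzA, hyz⟩ := hyz
  exact hyz ▸ h.exists_add_two hyA hzA hy.2 hz hdistinct

end Solve

end IsDistinctCombination

section Chain

variable {R V : Type*} [Ring R] [IsCancelMulZero R] [AddCommGroup V] [Module R V]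
  [Module.IsTorsionFree R V] {a : ℕ → R} {A : Set V} {As : ℕ → Set V} {d : ℕ}

lemma exists_isDistinctCombination_sum_smul
    (hb : ∀ k, 2 ≤ k → k ≤ d → ∑ i ∈ Finset.Icc 1 k, a i ≠ 0)
    (hmono : MonotoneOn As (Icc 1 d)) (hlast : As d ⊆ A) (hne : (As 1).Nonempty)
    (h1 : ∀ t ∈ As 1, 1 < {p : V × V | p.1 ∈ As 2 ∧ p.2 ∈ As 2 ∧
      a 1 • p.1 + a 2 • p.2 = (∑ i ∈ Finset.Icc 1 2, a i) • t}.encard)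
    (h2 : ∀ k, 2 ≤ k → k < d → ∀ t ∈ As k, k < {p : V × V | p.1 ∈ As (k + 1) ∧ p.2 ∈ As (k + 1) ∧
      (∑ i ∈ Finset.Icc 1 k, a i) • t + a (k + 1) • p.1 =
        (∑ i ∈ Finset.Icc 1 (k + 1), a i) • p.2}.encard)
    {k : ℕ} (hk : 2 ≤ k) (hkd : k ≤ d) :
    ∃ t ∈ As k, ∃ x, IsDistinctCombination a A k x ((∑ i ∈ Finset.Icc 1 k, a i) • t) := by
  have hA : ∀ j, 1 ≤ j → j ≤ d → As j ⊆ A := fun j hj hjd ↦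
    (hmono ⟨hj, hjd⟩ ⟨hj.trans hjd, le_rfl⟩ hjd).trans hlast
  induction k, hk using Nat.le_induction with
  | base =>
    obtain ⟨t, ht⟩ := hne
    have hsum : ∑ i ∈ Finset.Icc 1 2, a i = a 1 + a 2 := by simp [Finset.sum_Icc_succ_top]
    have hb2 := hb 2 le_rfl hkd
    have hS := h1 t ht
    rw [hsum] at hb2 hS ⊢
    refine ⟨t, hmono ⟨le_rfl, by lia⟩ ⟨by lia, hkd⟩ one_le_two ht, ?_⟩
    obtain ⟨x, hx⟩ := IsDistinctCombination.exists_two hb2 hS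
    exact ⟨x, hx.mono (hA 2 one_le_two hkd)⟩
  | succ k hk ih =>
    obtain ⟨t, ht, x, hx⟩ := ih (by lia)
    exact hx.exists_add_one (hA (k + 1) (by lia) hkd) (hb (k + 1) (by lia) hkd) (h2 k hk hkd t ht)

theorem distinct_solution_from_chain_general (hd : 2 ≤ d)
    (ha₁ : a (d + 1) ≠ 0) (ha₂ : a (d + 2) ≠ 0) (hsum : ∑ i ∈ Finset.Icc 1 (d + 2), a i = 0)
    (hb : ∀ k, 2 ≤ k → k ≤ d → ∑ i ∈ Finset.Icc 1 k, a i ≠ 0)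
    (hmono : MonotoneOn As (Icc 1 d)) (hlast : As d ⊆ A) (hne : (As 1).Nonempty)
    (h1 : ∀ t ∈ As 1, 1 < {p : V × V | p.1 ∈ As 2 ∧ p.2 ∈ As 2 ∧
      a 1 • p.1 + a 2 • p.2 = (∑ i ∈ Finset.Icc 1 2, a i) • t}.encard)
    (h2 : ∀ k, 2 ≤ k → k < d → ∀ t ∈ As k, k < {p : V × V | p.1 ∈ As (k + 1) ∧ p.2 ∈ As (k + 1) ∧
      (∑ i ∈ Finset.Icc 1 k, a i) • t + a (k + 1) • p.1 =
        (∑ i ∈ Finset.Icc 1 (k + 1), a i) • p.2}.encard)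
    (h3 : ∀ t ∈ As d, (2 * d + 1 : ℕ) < {p : V × V | p.1 ∈ A ∧ p.2 ∈ A ∧
      (∑ i ∈ Finset.Icc 1 d, a i) • t + a (d + 1) • p.1 + a (d + 2) • p.2 = 0}.encard) :
    ∃ x : ℕ → V, (∀ i, 1 ≤ i → i ≤ d + 2 → x i ∈ A) ∧ InjOn x (Icc 1 (d + 2)) ∧
      ∑ i ∈ Finset.Icc 1 (d + 2), a i • x i = 0 := by
  obtain ⟨t, ht, x, hx⟩ := exists_isDistinctCombination_sum_smul hb hmono hlast hne h1 h2 hd le_rfl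
  rw [Finset.sum_Icc_succ_top (by lia), Finset.sum_Icc_succ_top (by lia)] at hsum
  obtain ⟨x', hx'⟩ := hx.exists_add_two_of_add_eq_zero (hb d hd le_rfl) ha₁ ha₂ hsum (h3 t ht)
  exact ⟨x', fun i hi hid ↦ hx'.mapsTo ⟨hi, hid⟩, hx'.injOn, hx'.sum_eq⟩

end Chain

/-- **Lemma (iterative construction of a solution with distinct entries).**
Let `d ≥ 4` and `a_1, …, a_d ∈ F_q \ {0}` (written `a 1, …, a d` for `a : ℕ → F`)
with `a_1 + ⋯ + a_d = 0`, such that the partial sums `b_k = a_1 + ⋯ + a_k` are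
nonzero for `2 ≤ k ≤ d - 2`. Let `m ≥ 2d`, `A ⊆ F_q^n` and nonempty sets
`A_1 ⊆ A_2 ⊆ ⋯ ⊆ A_{d-2} ⊆ A` such that:
(i) every `t ∈ A_1` has at least `m` pairs `(x₁, x₂) ∈ A_2²` with
    `a_1 x₁ + a_2 x₂ = b_2 t`;
(ii) for `2 ≤ k ≤ d - 3`, every `t ∈ A_k` has at least `m` pairs
    `(x, t') ∈ A_{k+1}²` with `b_k t + a_{k+1} x = b_{k+1} t'`;
(iii) every `t ∈ A_{d-2}` has at least `m` pairs `(x, y) ∈ A²` with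
    `b_{d-2} t + a_{d-1} x + a_d y = 0`.
Then there exist pairwise distinct `x_1, …, x_d ∈ A` with
`a_1 x_1 + ⋯ + a_d x_d = 0`. -/
theorem distinct_solution_from_chain {F : Type*} [Field F] [Fintype F]
    {n : ℕ} (hn : 0 < n) {d : ℕ} (hd : 4 ≤ d) (a : ℕ → F)
    (ha : ∀ i, 1 ≤ i → i ≤ d → a i ≠ 0)
    (hsum : ∑ i ∈ Finset.Icc 1 d, a i = 0)
    (hb : ∀ k, 2 ≤ k → k ≤ d - 2 → ∑ i ∈ Finset.Icc 1 k, a i ≠ 0)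
    (m : ℕ) (hm : 2 * d ≤ m)
    (A : Set (Fin n → F)) (As : ℕ → Set (Fin n → F))
    (hchain : ∀ k, 1 ≤ k → k ≤ d - 3 → As k ⊆ As (k + 1))
    (hlast : As (d - 2) ⊆ A)
    (hne : ∀ k, 1 ≤ k → k ≤ d - 2 → (As k).Nonempty)
    (h1 : ∀ t ∈ As 1,
      m ≤ ({p : (Fin n → F) × (Fin n → F) | p.1 ∈ As 2 ∧ p.2 ∈ As 2 ∧
        a 1 • p.1 + a 2 • p.2 = (∑ i ∈ Finset.Icc 1 2, a i) • t}).ncard)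
    (h2 : ∀ k, 2 ≤ k → k ≤ d - 3 → ∀ t ∈ As k,
      m ≤ ({p : (Fin n → F) × (Fin n → F) | p.1 ∈ As (k + 1) ∧ p.2 ∈ As (k + 1) ∧
        (∑ i ∈ Finset.Icc 1 k, a i) • t + a (k + 1) • p.1 =
          (∑ i ∈ Finset.Icc 1 (k + 1), a i) • p.2}).ncard)
    (h3 : ∀ t ∈ As (d - 2),
      m ≤ ({p : (Fin n → F) × (Fin n → F) | p.1 ∈ A ∧ p.2 ∈ A ∧
        (∑ i ∈ Finset.Icc 1 (d - 2), a i) • t + a (d - 1) • p.1 +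
          a d • p.2 = 0}).ncard) :
    ∃ x : ℕ → (Fin n → F), (∀ i, 1 ≤ i → i ≤ d → x i ∈ A) ∧
      Set.InjOn x (Set.Icc 1 d) ∧ ∑ i ∈ Finset.Icc 1 d, a i • x i = 0 := by
  obtain ⟨d, rfl⟩ := Nat.exists_eq_add_of_le' ((by decide : 2 ≤ 4).trans hd)
  exact distinct_solution_from_chain_general (by lia) (ha _ (by lia) (by lia))
    (ha _ (by lia) le_rfl) hsum hb
    (monotoneOn_of_le_add_one ordConnected_Icc fun k _ hk hk' ↦
      hchain k hk.1 (Nat.le_sub_one_of_lt hk'.2)) hlast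
    (hne 1 le_rfl (by lia))
    (fun t ht ↦ mod_cast natCast_lt_encard_of_lt_of_le_ncard (by lia) (h1 t ht))
    (fun k hk hkd t ht ↦ natCast_lt_encard_of_lt_of_le_ncard (by lia) (h2 k hk (by lia) t ht))
    (fun t ht ↦ natCast_lt_encard_of_lt_of_le_ncard (by lia) (h3 t ht))
end

section
/- There exists c_q < q such that for all sufficiently large n, every set A ⊆ F_q^n that is a cap set for some admissible tuple (a,b,c) satisfies |A| ≤ c_q^n. -/
/-!
Over `F_q`, the polynomial `1 - t ^ (q - 1)` is the indicator of `t = 0`. Its values at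
`t = a xᵢ + b yᵢ + c zᵢ`, multiplied over the coordinates, give the indicator of the diagonal of a
cap set as a polynomial in `(x, y, z)`. Each of its monomials has total degree at most `n (q - 1)`,
so its part in one of `x`, `y`, `z` has degree at most `n (q - 1) / 3`.
Let `U` be the space of functions on the cap set spanned by the reduced monomials of that degree.
Contracting the diagonal with two functions orthogonal to `U` shows that their product lies in `U`.
A function of maximal support in the orthogonal complement of `U` multiplies this complement
injectively into `U`, so the cap set has at most `2 dim U` points. A reduced monomial has average
degree `n (q - 1) / 2`, hence those of degree at most `n (q - 1) / 3` are exponentially rare.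
-/

open Finset Module MvPolynomial

section Diagonal

variable {ι κ : Type*}

lemma exists_mem_forall_mul_eq_zero_imp_eq_zero {R : Type*} [NonUnitalNonAssocSemiring R]
    [NoZeroDivisors R] [Finite ι] (W : AddSubmonoid (ι → R)) :
    ∃ h ∈ W, ∀ w ∈ W, h * w = 0 → w = 0 := by
  obtain ⟨h, hW, hmax⟩ := Set.Finite.exists_maximalFor' Function.support (W : Set (ι → R))
    (Set.toFinite _) ⟨0, W.zero_mem⟩
  refine ⟨h, hW, fun w hw hmul ↦ funext fun i ↦ by_contra fun hwi ↦ ?_⟩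
  have disjoint (j : ι) : h j = 0 ∨ w j = 0 := mul_eq_zero.1 (congrFun hmul j)
  have support_le : Function.support h ≤ Function.support (h + w) := fun j hj ↦ by
    simpa [(disjoint j).resolve_left hj] using hj
  have hi : h i = 0 := (disjoint i).resolve_right hwi
  exact hmax (W.add_mem hW hw) support_le (by simpa [hi] using hwi : (h + w) i ≠ 0) hi

lemma card_le_two_mul_finrank_of_mul_mem {K : Type*} [Field K] [Fintype ι]
    {U : Submodule K (ι → K)}
    (hU : ∀ h w : ι → K, (∀ u ∈ U, u ⬝ᵥ h = 0) → (∀ u ∈ U, u ⬝ᵥ w = 0) → h * w ∈ U) :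
    Fintype.card ι ≤ 2 * finrank K U := by
  let W : Submodule K (ι → K) := LinearMap.BilinForm.orthogonal (dotProductBilin K K) U
  obtain ⟨h, hW, hinj⟩ := exists_mem_forall_mul_eq_zero_imp_eq_zero W.toAddSubmonoid
  let mulLeft : W →ₗ[K] U := (LinearMap.mulLeft K h).restrict fun w hw ↦ hU h w hW hw
  have mulLeft_injective : Function.Injective mulLeft :=
    (injective_iff_map_eq_zero _).2 fun w hw ↦
      Subtype.ext (hinj w w.2 (congrArg Subtype.val hw))
  have finrank_W_le : finrank K W ≤ finrank K U :=
    LinearMap.finrank_le_finrank_of_injective mulLeft_injective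
  have card_le : Fintype.card ι ≤ finrank K U + finrank K W := by
    rw [LinearMap.BilinForm.finrank_add_finrank_orthogonal', finrank_fintype_fun_eq_card]
    exact Nat.le_add_right _ _
  lia

lemma mul_eq_sum_of_diagonal_eq_sum {R : Type*} [CommSemiring R] [Fintype ι] [DecidableEq ι]
    {s : Finset κ} {C : κ → R} {u : κ → Fin 3 → ι → R}
    (hdiag : ∀ x y z, (if x = y ∧ y = z then 1 else 0) =
      ∑ k ∈ s, C k * (u k 0 x * u k 1 y * u k 2 z)) (h w : ι → R) :
    h * w = ∑ k ∈ s, (C k * (u k 0 ⬝ᵥ h) * (u k 1 ⬝ᵥ w)) • u k 2 := by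
  ext z
  calc (h * w) z = ∑ x, ∑ y, h x * w y * (if x = y ∧ y = z then 1 else 0) := by
        simp [ite_and]
    _ = ∑ x, ∑ y, ∑ k ∈ s, h x * w y * (C k * (u k 0 x * u k 1 y * u k 2 z)) := by
        simp only [hdiag, mul_sum]
    _ = ∑ k ∈ s, ∑ x, ∑ y, h x * w y * (C k * (u k 0 x * u k 1 y * u k 2 z)) := by
        rw [sum_comm_cycle]
    _ = (∑ k ∈ s, (C k * (u k 0 ⬝ᵥ h) * (u k 1 ⬝ᵥ w)) • u k 2) z := by
        simp only [dotProduct, Finset.sum_apply, Pi.smul_apply, smul_eq_mul, sum_mul,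
          mul_sum]
        refine sum_congr rfl fun k _ ↦ ?_
        rw [sum_comm]
        refine sum_congr rfl fun y _ ↦ sum_congr rfl fun x _ ↦ ?_
        ring

lemma card_le_two_mul_finrank_of_diagonal_eq_sum {K : Type*} [Field K] [Fintype ι] [DecidableEq ι]
    {U : Submodule K (ι → K)} {s : Finset κ} {C : κ → K} {u : κ → Fin 3 → ι → K}
    (hu : ∀ k ∈ s, ∃ j, u k j ∈ U)
    (hdiag : ∀ x y z, (if x = y ∧ y = z then 1 else 0) =
      ∑ k ∈ s, C k * (u k 0 x * u k 1 y * u k 2 z)) :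
    Fintype.card ι ≤ 2 * finrank K U := by
  refine card_le_two_mul_finrank_of_mul_mem fun h w hh hw ↦ ?_
  rw [mul_eq_sum_of_diagonal_eq_sum hdiag]
  refine U.sum_mem fun k hk ↦ ?_
  obtain ⟨j, hj⟩ := hu k hk
  match j with
  | 0 => simp [hh _ hj]
  | 1 => simp [hw _ hj]
  | 2 => exact U.smul_mem _ hj

end Diagonal

/-- At `s = 1` both sides equal `d + 1`, and the left one has the larger derivative. -/
lemma exists_sum_pow_pow_lt {d k : ℕ} (hd : d ≠ 0) (hk : 2 < k) :
    ∃ s : ℝ, 0 < s ∧ s < 1 ∧ ∑ i ∈ range (d + 1), (s ^ k) ^ i < (d + 1) * s ^ d := by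
  let f : ℝ → ℝ := fun s ↦ ∑ i ∈ range (d + 1), s ^ (k * i) - (d + 1) * s ^ d
  have hasDerivAt_f : HasDerivAt f ((k - 2) * (d * (d + 1) / 2)) 1 := by
    have sum_id : (∑ i ∈ range (d + 1), (i : ℝ)) * 2 = (d + 1) * d := by
      simpa using congrArg (Nat.cast (R := ℝ)) (sum_range_id_mul_two (d + 1))
    convert! (HasDerivAt.fun_sum fun i (_ : i ∈ range (d + 1)) ↦
      hasDerivAt_pow (k * i) (1 : ℝ)).sub ((hasDerivAt_pow d 1).const_mul (d + 1 : ℝ)) using 1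
    simp only [one_pow, mul_one, Nat.cast_mul, ← mul_sum]
    linear_combination (-(k : ℝ) / 2) * sum_id
  have deriv_pos : 0 < deriv f 1 := by
    rw [hasDerivAt_f.deriv]
    exact mul_pos (sub_pos.2 (mod_cast hk)) (by positivity)
  have sign_f := eventually_nhdsWithin_sign_eq_of_deriv_pos deriv_pos (by simp [f])
  obtain ⟨s, ⟨hsign, hs₀⟩, hs₁⟩ := (((sign_f.and (lt_mem_nhds one_pos)).filter_mono
    nhdsWithin_le_nhds).and (self_mem_nhdsWithin (s := Set.Iio 1))).exists
  have f_neg : f s < 0 := by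
    rwa [sign_neg (sub_neg.2 hs₁), sign_eq_neg_one_iff] at hsign
  refine ⟨s, hs₀, hs₁, ?_⟩
  simpa only [f, sub_neg, pow_mul] using f_neg

lemma eventually_const_mul_pow_le_pow {r₁ r₂ : ℝ} (C : ℝ) (h₁ : 0 ≤ r₁) (h₂ : r₁ < r₂) :
    ∀ᶠ n : ℕ in Filter.atTop, C * r₁ ^ n ≤ r₂ ^ n := by
  filter_upwards [((isLittleO_pow_pow_of_lt_left h₁ h₂).const_mul_left C).bound one_pos] with n hn
  rw [one_mul, Real.norm_of_nonneg (pow_nonneg (h₁.trans h₂.le) n)] at hn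
  exact (Real.le_norm_self _).trans hn

section Exponents

variable (ι : Type*) [Fintype ι] [DecidableEq ι]

/-- The exponent vectors of the monomials in the variables `ι` of degree at most `d` in each
variable and of total degree at most `D`. Over a field with `q` elements, the choice `d = q - 1`
gives the reduced monomials. -/
def boundedExponents (d D : ℕ) : Finset (ι → ℕ) :=
  {e ∈ Fintype.piFinset fun _ ↦ range (d + 1) | ∑ i, e i ≤ D}

variable {ι}

/-- The space of functions on `A` spanned by the monomials with exponents in
`boundedExponents ι d D`. -/
def boundedDegreeFunctions {R : Type*} [CommSemiring R] (A : Set (ι → R)) (d D : ℕ) :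
    Submodule R (A → R) :=
  Submodule.span R ((fun (e : ι → ℕ) (x : A) ↦ ∏ i, x.1 i ^ e i) '' boundedExponents ι d D)

lemma finrank_boundedDegreeFunctions_le {R : Type*} [CommSemiring R] [StrongRankCondition R]
    (A : Set (ι → R)) (d D : ℕ) :
    finrank R (boundedDegreeFunctions A d D) ≤ #(boundedExponents ι d D) := by
  classical
  rw [boundedDegreeFunctions, ← coe_image]
  exact (finrank_span_finset_le_card _).trans card_image_le

lemma exists_mem_boundedExponents_of_degree_le {σ : Type*} [Fintype σ] [Nonempty σ] {d : ℕ}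
    {φ : ι → σ →₀ ℕ} (hφ : ∀ i, (φ i).degree ≤ d) :
    ∃ j, (fun i ↦ φ i j) ∈ boundedExponents ι d (Fintype.card ι * d / Fintype.card σ) := by
  have sum_le : ∑ j, ∑ i, φ i j ≤ Fintype.card ι * d := calc
    ∑ j, ∑ i, φ i j = ∑ i, (φ i).degree := by
      simp only [Finsupp.degree_eq_sum, sum_comm (s := univ (α := σ))]
    _ ≤ Fintype.card ι * d := by simpa using sum_le_card_nsmul univ _ d fun i _ ↦ hφ i
  obtain ⟨j, -, hj⟩ : ∃ j ∈ univ, Fintype.card σ * ∑ i, φ i j ≤ Fintype.card ι * d :=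
    exists_le_of_sum_le univ_nonempty (by simpa [← mul_sum] using Nat.mul_le_mul_left _ sum_le)
  refine ⟨j, mem_filter.2 ⟨Fintype.mem_piFinset.2 fun i ↦ mem_range_succ_iff.2 ?_, ?_⟩⟩
  · exact (Finsupp.le_degree j (φ i)).trans (hφ i)
  · rwa [Nat.le_div_iff_mul_le Fintype.card_pos, mul_comm]

/-- Rankin's trick: weight the exponent vector `e` by `x ^ (∑ i, e i - D)`, which is at least `1`
on `boundedExponents ι d D`. -/
lemma card_boundedExponents_mul_pow_le {R : Type*} [CommSemiring R] [PartialOrder R]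
    [IsOrderedRing R] {x : R} (hx₀ : 0 ≤ x) (hx₁ : x ≤ 1) (d D : ℕ) :
    #(boundedExponents ι d D) * x ^ D ≤ (∑ i ∈ range (d + 1), x ^ i) ^ Fintype.card ι :=
  calc #(boundedExponents ι d D) * x ^ D = ∑ _e ∈ boundedExponents ι d D, x ^ D := by simp
    _ ≤ ∑ e ∈ boundedExponents ι d D, x ^ ∑ i, e i :=
        sum_le_sum fun e he ↦ pow_le_pow_of_le_one hx₀ hx₁ (mem_filter.1 he).2
    _ ≤ ∑ e ∈ Fintype.piFinset fun _ : ι ↦ range (d + 1), x ^ ∑ i, e i :=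
        sum_le_sum_of_subset_of_nonneg (filter_subset _ _) fun _ _ _ ↦ pow_nonneg hx₀ _
    _ = (∑ i ∈ range (d + 1), x ^ i) ^ Fintype.card ι := by
        simp only [← prod_pow_eq_pow_sum, ← card_univ, ← prod_const, prod_univ_sum]

lemma exists_card_boundedExponents_le_pow {d k : ℕ} (hd : d ≠ 0) (hk : 2 < k) :
    ∃ c : ℝ, 0 ≤ c ∧ c < d + 1 ∧
      ∀ n : ℕ, (#(boundedExponents (Fin n) d (n * d / k)) : ℝ) ≤ c ^ n := by
  obtain ⟨s, hs₀, hs₁, hs⟩ := exists_sum_pow_pow_lt hd hk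
  refine ⟨(∑ i ∈ range (d + 1), (s ^ k) ^ i) / s ^ d, by positivity,
    (div_lt_iff₀ (by positivity)).2 hs, fun n ↦ ?_⟩
  rw [div_pow, le_div_iff₀ (by positivity)]
  calc #(boundedExponents (Fin n) d (n * d / k)) * (s ^ d) ^ n
      ≤ #(boundedExponents (Fin n) d (n * d / k)) * (s ^ k) ^ (n * d / k) := by
        rw [← pow_mul, ← pow_mul, mul_comm d]
        gcongr _ * ?_
        exact pow_le_pow_of_le_one hs₀.le hs₁.le (Nat.mul_div_le _ _)
    _ ≤ (∑ i ∈ range (d + 1), (s ^ k) ^ i) ^ n := by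
        simpa using card_boundedExponents_mul_pow_le (ι := Fin n) (by positivity)
          (pow_le_one₀ hs₀.le hs₁.le) d (n * d / k)

end Exponents

section Polynomial

variable {ι σ : Type*} [Fintype σ]

lemma prod_eval_eq_sum_piFinset_support {R : Type*} [CommSemiring R] [Fintype ι] [DecidableEq ι]
    (p : MvPolynomial σ R) (v : ι → σ → R) :
    ∏ i, eval (v i) p = ∑ φ ∈ Fintype.piFinset fun _ ↦ p.support,
      (∏ i, coeff (φ i) p) * ∏ j, ∏ i, v i j ^ φ i j := by
  simp only [eval_eq', prod_univ_sum, prod_mul_distrib]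
  exact sum_congr rfl fun φ _ ↦ congrArg _ prod_comm

variable {F : Type*} [Field F] [Fintype F]

/-- The polynomial whose values are the indicator function of the hyperplane `∑ j, a j * v j = 0`
over a finite field. -/
noncomputable def hyperplaneIndicator (a : σ → F) : MvPolynomial σ F :=
  1 - (∑ j, C (a j) * X j) ^ (Fintype.card F - 1)

lemma eval_hyperplaneIndicator [DecidableEq F] (a v : σ → F) :
    eval v (hyperplaneIndicator a) = if ∑ j, a j * v j = 0 then 1 else 0 := by
  have : Fintype.card F - 1 ≠ 0 := Nat.sub_ne_zero_of_lt Fintype.one_lt_card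
  split_ifs with h
  · simp [hyperplaneIndicator, h, this]
  · simp [hyperplaneIndicator, FiniteField.pow_card_sub_one_eq_one _ h]

lemma totalDegree_hyperplaneIndicator_le (a : σ → F) :
    (hyperplaneIndicator a).totalDegree ≤ Fintype.card F - 1 := by
  have linear : (∑ j, C (a j) * X j).totalDegree ≤ 1 :=
    totalDegree_finsetSum_le fun j _ ↦ (totalDegree_mul _ _).trans (by simp)
  refine (totalDegree_sub _ _).trans (max_le (by simp) ?_)
  exact (totalDegree_pow _ _).trans (mul_le_of_le_one_right' linear)

end Polynomial

/-- `A` is a cap set for `(a, b, c)`: the equation `a x + b y + c z = 0` has only constant solutions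
in `A`. The scalars are arbitrary; the paper considers admissible triples. -/
def IsCapSet {R V : Type*} [AddMonoid V] [SMul R V] (a b c : R) (A : Set V) : Prop :=
  ∀ x ∈ A, ∀ y ∈ A, ∀ z ∈ A, a • x + b • y + c • z = 0 → x = y ∧ y = z

namespace IsCapSet

variable {ι F : Type*} [Fintype ι] [Field F] [Fintype F] {a b c : F} {A : Set (ι → F)}

lemma diagonal_eq_prod_eval [DecidableEq F] (hA : IsCapSet a b c A) (habc : a + b + c = 0)
    (x y z : A) :
    (if x = y ∧ y = z then 1 else 0) =
      ∏ i, eval ![x.1 i, y.1 i, z.1 i] (hyperplaneIndicator ![a, b, c]) := by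
  have solution_iff : (∀ i, a * x.1 i + b * y.1 i + c * z.1 i = 0) ↔ x = y ∧ y = z := by
    constructor
    · intro h
      simpa only [Subtype.ext_iff] using hA x x.2 y y.2 z z.2 (funext h)
    · rintro ⟨rfl, rfl⟩ i
      rw [← add_mul, ← add_mul, habc, zero_mul]
  simp [eval_hyperplaneIndicator, Fin.sum_univ_three, prod_boole, solution_iff]

theorem ncard_le [DecidableEq ι] (hA : IsCapSet a b c A) (habc : a + b + c = 0) :
    A.ncard ≤ 2 * #(boundedExponents ι (Fintype.card F - 1)
      (Fintype.card ι * (Fintype.card F - 1) / 3)) := by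
  classical
  have := Fintype.ofFinite A
  let p := hyperplaneIndicator ![a, b, c]
  let mon (φ : ι → Fin 3 →₀ ℕ) (j : Fin 3) (x : A) : F := ∏ i, x.1 i ^ φ i j
  rw [← Nat.card_coe_set_eq, Nat.card_eq_fintype_card]
  refine (card_le_two_mul_finrank_of_diagonal_eq_sum (s := Fintype.piFinset fun _ ↦ p.support)
    (C := fun φ ↦ ∏ i, coeff (φ i) p) (u := mon) ?_ fun x y z ↦ ?_).trans
    (Nat.mul_le_mul_left 2 (finrank_boundedDegreeFunctions_le A _ _))
  · intro φ hφ
    have degree_le (i : ι) : (φ i).degree ≤ Fintype.card F - 1 :=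
      (le_totalDegree (Fintype.mem_piFinset.1 hφ i)).trans (totalDegree_hyperplaneIndicator_le _)
    obtain ⟨j, hj⟩ := exists_mem_boundedExponents_of_degree_le degree_le
    exact ⟨j, Submodule.subset_span ⟨_, hj, rfl⟩⟩
  · rw [hA.diagonal_eq_prod_eval habc, prod_eval_eq_sum_piFinset_support]
    simp [Fin.prod_univ_three, mon, p]

end IsCapSet

/-- **Theorem (Ellenberg–Gijswijt).** There exists `c_q < q` such that for all
sufficiently large `n`, every `A ⊆ F_q^n` that is a cap set for some admissible
tuple `(a, b, c)` (i.e. `a, b, c ≠ 0`, `a + b + c = 0`, and every `(x, y, z) ∈ A³`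
with `ax + by + cz = 0` has `x = y = z`) satisfies `|A| ≤ c_q^n`. -/
theorem cap_set_bound {F : Type*} [Field F] [Fintype F] :
    ∃ cq : ℝ, cq < (Fintype.card F : ℝ) ∧ ∃ N : ℕ, ∀ n : ℕ, N ≤ n →
      ∀ A : Set (Fin n → F),
        (∃ a b c : F, a ≠ 0 ∧ b ≠ 0 ∧ c ≠ 0 ∧ a + b + c = 0 ∧
          ∀ x ∈ A, ∀ y ∈ A, ∀ z ∈ A,
            a • x + b • y + c • z = 0 → x = y ∧ y = z) →
        (A.ncard : ℝ) ≤ cq ^ n := by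
  have hq : 1 < Fintype.card F := Fintype.one_lt_card
  obtain ⟨r, hr₀, hr, card_le⟩ :=
    exists_card_boundedExponents_le_pow (Nat.sub_ne_zero_of_lt hq) (k := 3) (by norm_num)
  rw [Nat.cast_pred (by lia), sub_add_cancel] at hr
  obtain ⟨r', hrr', hr'⟩ := exists_between hr
  obtain ⟨N, hN⟩ := Filter.eventually_atTop.1 (eventually_const_mul_pow_le_pow 2 hr₀ hrr')
  refine ⟨r', hr', N, fun n hn A ⟨a, b, c, _, _, _, habc, hA⟩ ↦ ?_⟩
  calc (A.ncard : ℝ)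
      ≤ 2 * #(boundedExponents (Fin n) (Fintype.card F - 1) (n * (Fintype.card F - 1) / 3)) := by
        have := IsCapSet.ncard_le hA habc
        rw [Fintype.card_fin] at this
        exact_mod_cast this
    _ ≤ 2 * r ^ n := by gcongr; exact card_le n
    _ ≤ r' ^ n := hN n hn
end
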